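/- arXiv:1812.04781 — 2 statements merged into one kernel-verified Lean document; each statement's English description precedes it below -/
import Mathlib

section
/- For every m ≥ 1 and every n ≥ 1 there exist mn homogeneous polynomials f_1, f_2, …, f_{mn} in the invariant ring 𝔽_q[mW]^{SL_n(𝔽_q)} such that the invariant field 𝔽_q(mW)^{SL_n(𝔽_q)} is generated by them: 𝔽_q(mW)^{SL_n(𝔽_q)} = 𝔽_q(f_1, f_2, …, f_{mn}). -/
open MvPolynomial Matrix

set_option maxHeartbeats 1000000
set_option synthInstance.maxHeartbeats 400000

noncomputable section

/-- The polynomial ring `𝔽_q[mW]` in the variables `x_{ij}`, `1 ≤ i ≤ m`, `1 ≤ j ≤ n`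
(indexed here by `(i, j) : Fin m × Fin n`). -/
abbrev PolyMW (F : Type) [Field F] (m n : ℕ) : Type := MvPolynomial (Fin m × Fin n) F

/-- The rational function field `𝔽_q(mW)`. -/
abbrev RatMW (F : Type) [Field F] (m n : ℕ) : Type := FractionRing (PolyMW F m n)

/-- The substitution endomorphism of `𝔽_q[mW]` induced by a matrix `σ`: it transforms each
column vector `X_i = ᵗ(x_{i1},…,x_{in})` by the standard action, `X_i ↦ σ • X_i`. -/
def matSub {F : Type} [Field F] {m n : ℕ} (σ : Matrix (Fin n) (Fin n) F) :
    PolyMW F m n →ₐ[F] PolyMW F m n :=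
  aeval fun v => ∑ l, C (σ v.2 l) * X (v.1, l)

lemma matSub_comp {F : Type} [Field F] {m n : ℕ} (A B : Matrix (Fin n) (Fin n) F) :
    (matSub (F := F) (m := m) (n := n) A).comp (matSub B) = matSub (B * A) := by
  apply MvPolynomial.algHom_ext
  rintro ⟨i, j⟩
  simp only [AlgHom.coe_comp, Function.comp_apply, matSub, aeval_X, map_sum, _root_.map_mul,
    aeval_C, MvPolynomial.algebraMap_eq, Finset.mul_sum]
  rw [Finset.sum_comm]
  refine Finset.sum_congr rfl fun s _ => ?_
  calc ∑ l, C (B j l) * (C (A l s) * X (i, s))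
      = (∑ l, C (B j l * A l s)) * X (i, s) := by
        rw [Finset.sum_mul]
        simp [C_mul, mul_assoc]
    _ = C ((B * A) j s) * X (i, s) := by
        rw [Matrix.mul_apply, map_sum]

lemma matSub_one {F : Type} [Field F] {m n : ℕ} :
    matSub (F := F) (m := m) (n := n) (1 : Matrix (Fin n) (Fin n) F) = AlgHom.id F _ := by
  apply MvPolynomial.algHom_ext
  rintro ⟨i, j⟩
  simp [matSub, Matrix.one_apply, ite_mul, apply_ite (C (σ := Fin m × Fin n) (R := F))]

/-- The algebra automorphism of `𝔽_q[mW]` induced by `σ ∈ GL_n(𝔽_q)`. -/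
def matAut {F : Type} [Field F] {m n : ℕ} (σ : GL (Fin n) F) :
    PolyMW F m n ≃ₐ[F] PolyMW F m n :=
  AlgEquiv.ofAlgHom (matSub (σ : Matrix (Fin n) (Fin n) F))
    (matSub ((↑(σ⁻¹) : Matrix (Fin n) (Fin n) F)))
    (by rw [matSub_comp, σ.inv_mul, matSub_one])
    (by rw [matSub_comp, σ.mul_inv, matSub_one])

/-- The automorphism of `𝔽_q(mW)` induced by the action of `σ ∈ GL_n(𝔽_q)` on `𝔽_q[mW]`. -/
def fracAct {F : Type} [Field F] {m n : ℕ} (σ : GL (Fin n) F) :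
    RatMW F m n →+* RatMW F m n :=
  (IsFractionRing.ringEquivOfRingEquiv
    ((matAut (F := F) (m := m) (n := n) σ).toRingEquiv) :
    RatMW F m n ≃+* RatMW F m n).toRingHom

/-- The fixed subfield `𝔽_q(mW)^G` of a subgroup `G ≤ GL_n(𝔽_q)`. -/
def fixedSubfield (F : Type) [Field F] (m n : ℕ) (G : Subgroup (GL (Fin n) F)) :
    Subfield (RatMW F m n) where
  carrier := {a : RatMW F m n | ∀ σ ∈ G, fracAct σ a = a}
  mul_mem' := fun ha hb σ hσ => by
    rw [(fracAct σ).map_mul, ha σ hσ, hb σ hσ]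
  one_mem' := fun σ hσ => (fracAct σ).map_one
  add_mem' := fun ha hb σ hσ => by
    rw [(fracAct σ).map_add, ha σ hσ, hb σ hσ]
  zero_mem' := fun σ hσ => (fracAct σ).map_zero
  neg_mem' := fun ha σ hσ => by rw [(fracAct σ).map_neg, ha σ hσ]
  inv_mem' := fun a ha σ hσ => by rw [map_inv₀ (fracAct σ), ha σ hσ]

/-- `SL_n(𝔽_q)` as the subgroup of `GL_n(𝔽_q)` of matrices of determinant `1`. -/
def SLsub (F : Type) [Field F] (n : ℕ) : Subgroup (GL (Fin n) F) :=
  MonoidHom.ker (Units.map (Matrix.detMonoidHom (n := Fin n) (R := F)))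



/-- The `k`-th iterate of the `q`-Frobenius. -/
def frq (F : Type) [Field F] [Fintype F] (K : Type) [CommRing K] [Algebra F K] (k : ℕ) :
    K →ₐ[F] K := (FiniteField.frobeniusAlgHom F K) ^ k

lemma frq_apply (F : Type) [Field F] [Fintype F] (K : Type) [CommRing K] [Algebra F K] (k : ℕ)
    (y : K) : frq F K k y = y ^ (Fintype.card F ^ k) := by
  induction k with
  | zero => simp [frq]
  | succ k ih =>
    have : frq F K (k+1) y = FiniteField.frobeniusAlgHom F K (frq F K k y) := by
      simp [frq, pow_succ', AlgHom.mul_apply]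
    rw [this, ih, pow_succ, pow_mul]; rfl

/-- Moore matrix. -/
def moore (F : Type) [Fintype F] {K : Type} [CommRing K] {n : ℕ} (x : Fin n → K) :
    Matrix (Fin n) (Fin n) K := Matrix.of fun j k => x j ^ (Fintype.card F ^ (k : ℕ))

lemma comb_inj {F : Type} [Field F] {K : Type} [Field K] [Algebra F K]
    {n : ℕ} {x : Fin n → K} (hx : LinearIndependent F x) :
    Function.Injective (fun v : Fin n → F => ∑ j, v j • x j) := by
  exact linearIndependent_iff_injective_fintypeLinearCombination.mp hx

lemma sum_comb {F : Type} [Field F] [Fintype F] {K : Type} [Field K] [Algebra F K]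
    {n : ℕ} (x c : Fin n → K) (v : Fin n → F) :
    ∑ k : Fin n, c k * (∑ j, v j • x j) ^ (Fintype.card F ^ (k : ℕ)) =
      ∑ j, v j • ∑ k : Fin n, c k * x j ^ (Fintype.card F ^ (k : ℕ)) := by
  simp only [← frq_apply F K, map_sum, map_smul, Finset.smul_sum, Finset.mul_sum]
  rw [Finset.sum_comm]
  simp

lemma moore_ne {F : Type} [Field F] [Fintype F] {K : Type} [Field K] [Algebra F K]
    {n : ℕ} {x : Fin n → K} (hx : LinearIndependent F x) : (moore F x).det ≠ 0 := by
  intro h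
  obtain ⟨c, hc, h0⟩ := Matrix.exists_mulVec_eq_zero_iff.mpr h
  have hq : 1 < Fintype.card F := Fintype.one_lt_card
  let P : Polynomial K := ∑ k : Fin n, Polynomial.monomial (Fintype.card F ^ (k : ℕ)) (c k)
  have hP : P = 0 := by
    refine Polynomial.eq_zero_of_natDegree_lt_card_of_eval_eq_zero P (comb_inj hx) ?_ ?_
    · intro v
      simp only [P, Polynomial.eval_finsetSum, Polynomial.eval_monomial]
      rw [sum_comb]
      refine Finset.sum_eq_zero fun j _ => ?_
      have := congrFun h0 j
      simp only [Matrix.mulVec, dotProduct, moore, Matrix.of_apply, Pi.zero_apply] at this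
      rw [show ∑ k : Fin n, c k * x j ^ (Fintype.card F ^ (k : ℕ)) = 0 by
        rw [← this]; exact Finset.sum_congr rfl fun _ _ => mul_comm _ _, smul_zero]
    · rw [Fintype.card_fun, Fintype.card_fin]
      rcases n with _ | n
      · exact absurd (Subsingleton.elim c 0) hc
      refine lt_of_le_of_lt (Polynomial.natDegree_sum_le_of_forall_le (n := Fintype.card F ^ n) _ _ ?_)
        (Nat.pow_lt_pow_right hq (Nat.lt_succ_self n))
      intro k _
      exact (Polynomial.natDegree_monomial_le _).trans
        (Nat.pow_le_pow_right hq.le (Nat.lt_succ_iff.mp k.2))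
  apply hc
  funext k
  have := congrArg (fun p => Polynomial.coeff p (Fintype.card F ^ (k : ℕ))) hP
  simp only [P, Polynomial.finsetSum_coeff, Polynomial.coeff_monomial, Polynomial.coeff_zero] at this
  rw [Finset.sum_eq_single k] at this
  · simpa using this
  · intro b _ hb
    rw [if_neg]
    intro h
    exact hb (Fin.ext (Nat.pow_right_injective hq h))
  · simp

lemma galois_core {F : Type} [Field F] [Fintype F] {K : Type} [Field K] [Algebra F K]
    (E : IntermediateField F K)
    {n : ℕ} {x : Fin n → K} (hx : LinearIndependent F x) (c : Fin n → E)
    (hc : ∀ j, x j ^ (Fintype.card F ^ n) = ∑ k : Fin n, (c k : K) * x j ^ (Fintype.card F ^ (k : ℕ)))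
    (htop : IntermediateField.adjoin E (Set.range x) = ⊤) :
    IsGalois E K ∧ FiniteDimensional E K ∧ ∀ τ : K ≃ₐ[E] K, ∃ A : Matrix (Fin n) (Fin n) F,
      ∀ j, τ (x j) = ∑ l, A j l • x l := by
  have hq : 1 < Fintype.card F := Fintype.one_lt_card
  let Q : Polynomial E := ∑ k : Fin n, Polynomial.monomial (Fintype.card F ^ (k : ℕ)) (c k)
  have hQ : Q.degree < ((Fintype.card F ^ n : ℕ) : WithBot ℕ) := by
    refine lt_of_le_of_lt (Polynomial.degree_sum_le _ _) ?_
    rw [Finset.sup_lt_iff (WithBot.bot_lt_coe _)]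
    intro k _
    refine lt_of_le_of_lt (Polynomial.degree_monomial_le _ _) ?_
    exact_mod_cast Nat.pow_lt_pow_right hq k.2
  let P : Polynomial E := Polynomial.X ^ (Fintype.card F ^ n) - Q
  have hPm : P.Monic := Polynomial.monic_X_pow_sub hQ
  have hPd : P.natDegree = Fintype.card F ^ n := by
    apply Polynomial.natDegree_eq_of_degree_eq_some
    rw [Polynomial.degree_sub_eq_left_of_degree_lt] <;> rw [Polynomial.degree_X_pow]
    exact hQ
  let r : (Fin n → F) → K := fun v => ∑ j, v j • x j
  have hr : Function.Injective r := comb_inj hx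
  have hroot : ∀ v, (P.map (algebraMap E K)).eval (r v) = 0 := by
    intro v
    simp only [P, Q, Polynomial.map_sub, Polynomial.map_pow, Polynomial.map_X, Polynomial.eval_sub,
      Polynomial.eval_pow, Polynomial.eval_X, Polynomial.map_sum, Polynomial.map_monomial,
      Polynomial.eval_finsetSum, Polynomial.eval_monomial, r]
    rw [sub_eq_zero]
    refine Eq.trans ?_ (sum_comb x (fun k => (c k : K)) v).symm
    rw [← frq_apply F K]
    simp only [map_sum, map_smul, frq_apply, hc]
  have hfac : P.map (algebraMap E K) = ∏ v, (Polynomial.X - Polynomial.C (r v)) := by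
    refine Polynomial.eq_of_monic_of_dvd_of_natDegree_le
      (Polynomial.monic_prod_of_monic _ _ fun v _ => Polynomial.monic_X_sub_C _) (hPm.map _) ?_ ?_
    · refine Finset.prod_dvd_of_coprime ?_ ?_
      · intro a _ b _ hab
        exact Polynomial.pairwise_coprime_X_sub_C hr hab
      · intro v _
        exact Polynomial.dvd_iff_isRoot.mpr (hroot v)
    · rw [Polynomial.natDegree_map, hPd, Polynomial.natDegree_prod_of_monic _ _ fun v _ => Polynomial.monic_X_sub_C _]
      simp
  have hsep : P.Separable := by
    rw [← Polynomial.separable_map (algebraMap E K), hfac]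
    exact Polynomial.separable_prod_X_sub_C_iff.mpr hr
  have hsplit : P.IsSplittingField E K := by
    rw [isSplittingField_iff_intermediateField]
    constructor
    · rw [hfac]
      exact Polynomial.Splits.prod fun v _ => Polynomial.Splits.X_sub_C _
    · rw [eq_top_iff, ← htop]
      apply IntermediateField.adjoin.mono
      rintro _ ⟨j, rfl⟩
      rw [Polynomial.mem_rootSet']
      refine ⟨(hPm.map _).ne_zero, ?_⟩
      have := hroot (Pi.single j 1)
      rw [Polynomial.aeval_def, ← Polynomial.eval_map]
      simpa [r, Pi.single_apply] using this
  refine ⟨IsGalois.of_separable_splitting_field hsep, Polynomial.IsSplittingField.finiteDimensional K P, ?_⟩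
  intro τ
  have : ∀ j, ∃ v : Fin n → F, τ (x j) = ∑ l, v l • x l := by
    intro j
    have h1 : (P.map (algebraMap E K)).eval (x j) = 0 := by
      have := hroot (Pi.single j 1)
      simpa [r, Pi.single_apply] using this
    have h2 : (P.map (algebraMap E K)).eval (τ (x j)) = 0 := by
      rw [Polynomial.eval_map, ← Polynomial.aeval_def] at h1 ⊢
      rw [← AlgEquiv.coe_toAlgHom, Polynomial.aeval_algHom_apply, h1, map_zero]
    rw [hfac, Polynomial.eval_prod, Finset.prod_eq_zero_iff] at h2
    obtain ⟨v, _, hv⟩ := h2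
    simp only [Polynomial.eval_sub, Polynomial.eval_X, Polynomial.eval_C, sub_eq_zero] at hv
    exact ⟨v, hv⟩
  choose A hA using this
  exact ⟨A, hA⟩

/-- determinant transforms by det under an equivariance. -/
lemma det_equiv {F : Type} [Field F] {R : Type} [CommRing R] [Algebra F R] {n : ℕ}
    (φ : R →+* R) (A : Matrix (Fin n) (Fin n) F) (N : Matrix (Fin n) (Fin n) R)
    (h : ∀ j l, φ (N j l) = ∑ s, A j s • N s l) : φ N.det = algebraMap F R A.det * N.det := by
  rw [RingHom.map_det, RingHom.map_det, ← Matrix.det_mul]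
  congr 1
  ext j l
  simp [h, Matrix.mul_apply, Algebra.smul_def]

/-- First vector of variables. -/
def x0 (F : Type) [Field F] (m n : ℕ) : Fin (n+1) → PolyMW F (m+1) (n+1) := fun j => X (0, j)

/-- Right-hand sides. -/
def yv (F : Type) [Field F] [Fintype F] (m n : ℕ) (i : Fin (m+1)) :
    Fin (n+1) → PolyMW F (m+1) (n+1) :=
  fun j => if i = 0 then x0 F m n j ^ (Fintype.card F ^ (n+1)) else X (i, j)

/-- The generators. -/
def gen (F : Type) [Field F] [Fintype F] (m n : ℕ) (i : Fin (m+1)) (k : Fin (n+1)) :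
    PolyMW F (m+1) (n+1) :=
  if i = 0 ∧ k = 0 then (moore F (x0 F m n)).det
  else ((moore F (x0 F m n)).updateCol k (yv F m n i)).det

lemma matSub_X {F : Type} [Field F] {m n : ℕ} (A : Matrix (Fin n) (Fin n) F) (i : Fin m)
    (j : Fin n) : matSub A (X (i, j)) = ∑ l, A j l • (X (i, l) : PolyMW F m n) := by
  simp [matSub, MvPolynomial.smul_eq_C_mul]

lemma matSub_pow {F : Type} [Field F] [Fintype F] {m n : ℕ} (A : Matrix (Fin n) (Fin n) F)
    (i : Fin m) (j : Fin n) (k : ℕ) : matSub A (X (i, j) ^ (Fintype.card F ^ k)) =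
      ∑ l, A j l • (X (i, l) : PolyMW F m n) ^ (Fintype.card F ^ k) := by
  rw [map_pow, matSub_X, ← frq_apply F]
  simp only [map_sum, map_smul, frq_apply]

lemma matSub_gen {F : Type} [Field F] [Fintype F] {m n : ℕ}
    (A : Matrix (Fin (n+1)) (Fin (n+1)) F) (i : Fin (m+1)) (k : Fin (n+1)) :
    matSub A (gen F m n i k) = algebraMap F _ A.det * gen F m n i k := by
  unfold gen
  split_ifs with h
  · refine det_equiv (matSub A : PolyMW F (m+1) (n+1) →ₐ[F] PolyMW F (m+1) (n+1)).toRingHom A _ ?_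
    intro j l
    exact matSub_pow A 0 j l
  · refine det_equiv (matSub A : PolyMW F (m+1) (n+1) →ₐ[F] PolyMW F (m+1) (n+1)).toRingHom A _ ?_
    intro j l
    by_cases hl : l = k
    · subst hl
      simp only [Matrix.updateCol_self, yv]
      split_ifs with hi
      · exact matSub_pow A 0 j _
      · exact matSub_X A i j
    · simp only [Matrix.updateCol_ne hl]
      exact matSub_pow A 0 j l

lemma det_hom {F : Type} [Field F] {m n : ℕ} (N : Matrix (Fin n) (Fin n) (PolyMW F m n))
    (d : Fin n → ℕ) (h : ∀ j l, (N j l).IsHomogeneous (d l)) :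
    N.det.IsHomogeneous (∑ l, d l) := by
  rw [Matrix.det_apply]
  refine IsHomogeneous.sum _ _ _ fun σ _ => ?_
  have h1 := IsHomogeneous.prod Finset.univ (fun i => N (σ i) i) d fun i _ => h _ _
  rcases Int.units_eq_one_or (Equiv.Perm.sign σ) with hs | hs
  · rw [hs, one_smul]; exact h1
  · rw [hs, Units.neg_smul, one_smul]; exact h1.neg

lemma gen_hom {F : Type} [Field F] [Fintype F] {m n : ℕ} (i : Fin (m+1)) (k : Fin (n+1)) :
    ∃ d, (gen F m n i k).IsHomogeneous d := by
  have hp : ∀ (j : Fin (n+1)) (e : ℕ), (x0 F m n j ^ e).IsHomogeneous e := fun j e => by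
    simpa [x0] using (isHomogeneous_X F ((0 : Fin (m+1)), j)).pow e
  unfold gen
  split_ifs with h
  · exact ⟨_, det_hom _ (fun l => Fintype.card F ^ (l : ℕ)) fun j l => hp _ _⟩
  · refine ⟨_, det_hom _ (Function.update (fun l : Fin (n+1) => Fintype.card F ^ (l : ℕ)) k
      (if i = 0 then Fintype.card F ^ (n+1) else 1)) fun j l => ?_⟩
    by_cases hl : l = k
    · subst hl
      simp only [Matrix.updateCol_self, yv, Function.update_self]
      split_ifs with hi
      · exact hp _ _
      · exact isHomogeneous_X F _
    · simp only [Matrix.updateCol_ne hl, Function.update_of_ne hl]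
      exact hp _ _

/-- First vector in the fraction field. -/
def xK (F : Type) [Field F] (m n : ℕ) : Fin (n+1) → RatMW F (m+1) (n+1) :=
  fun j => algebraMap (PolyMW F (m+1) (n+1)) _ (x0 F m n j)

lemma xK_li (F : Type) [Field F] (m n : ℕ) : LinearIndependent F (xK F m n) := by
  have h0 : LinearIndependent F (x0 F m n) := by
    have h := (MvPolynomial.linearIndependent_X (σ := Fin (m+1) × Fin (n+1)) (R := F))
    exact h.comp (fun j => ((0 : Fin (m+1)), j)) (fun a b hab => by simpa using hab)
  let φ : PolyMW F (m+1) (n+1) →ₐ[F] RatMW F (m+1) (n+1) := IsScalarTower.toAlgHom F _ _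
  have hφ : Function.Injective φ := IsFractionRing.injective (PolyMW F (m+1) (n+1)) _
  exact h0.map' φ.toLinearMap (LinearMap.ker_eq_bot.mpr hφ)

lemma map_moore (F : Type) [Field F] [Fintype F] (m n : ℕ) :
    (moore F (x0 F m n)).map (algebraMap _ (RatMW F (m+1) (n+1))) = moore F (xK F m n) := by
  ext j k
  simp [moore, xK]

lemma map_gen (F : Type) [Field F] [Fintype F] (m n : ℕ) (i : Fin (m+1)) (k : Fin (n+1)) :
    algebraMap _ (RatMW F (m+1) (n+1)) (gen F m n i k) =
      if i = 0 ∧ k = 0 then (moore F (xK F m n)).det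
      else (moore F (xK F m n)).cramer (fun j => algebraMap _ _ (yv F m n i j)) k := by
  unfold gen
  split_ifs with h
  · rw [RingHom.map_det, RingHom.mapMatrix_apply, map_moore]
  · rw [RingHom.map_det, RingHom.mapMatrix_apply, Matrix.cramer_apply, ← map_moore,
      Matrix.map_updateCol]
    rfl

lemma fracAct_algebraMap {F : Type} [Field F] {m n : ℕ} (σ : GL (Fin n) F) (p : PolyMW F m n) :
    fracAct σ (algebraMap _ _ p) = algebraMap _ (RatMW F m n) (matSub (σ : Matrix (Fin n) (Fin n) F) p) :=
  IsFractionRing.ringEquivOfRingEquiv_algebraMap _ _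

lemma cramer_zero (F : Type) [Field F] [Fintype F] (m n : ℕ) :
    ∃ u : ℤ, (moore F (xK F m n)).cramer
      (fun j => algebraMap _ _ (yv F m n 0 j)) 0 = (u : RatMW F (m+1) (n+1)) *
      (moore F (xK F m n)).det ^ Fintype.card F := by
  refine ⟨(Equiv.Perm.sign (finRotate (n+1)).symm : ℤˣ), ?_⟩
  rw [Matrix.cramer_apply]
  have h1 : (moore F (xK F m n)).det ^ Fintype.card F =
      (((FiniteField.frobeniusAlgHom F (RatMW F (m+1) (n+1))).toRingHom.mapMatrix
        (moore F (xK F m n)))).det := by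
    rw [← RingHom.map_det]; rfl
  rw [h1, ← Matrix.det_permute']
  congr 1
  ext j k
  simp only [Matrix.submatrix_apply, id, RingHom.mapMatrix_apply, Matrix.map_apply]
  obtain ⟨l, rfl⟩ := (finRotate (n+1)).surjective k
  rw [Equiv.symm_apply_apply]
  have h2 : (FiniteField.frobeniusAlgHom F (RatMW F (m+1) (n+1))).toRingHom (moore F (xK F m n) j l)
     = xK F m n j ^ (Fintype.card F ^ ((l : ℕ) + 1)) := by
    rw [pow_succ, pow_mul]; rfl
  rw [h2]
  induction l using Fin.lastCases with
  | last =>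
    rw [finRotate_last, Matrix.updateCol_self]
    simp [yv, xK]
  | cast l =>
    have h3 : finRotate (n+1) l.castSucc = l.succ := by simp
    rw [h3, Matrix.updateCol_ne (Fin.succ_ne_zero l)]
    simp [moore]

/-- The field generated by the generators. -/
def EE (F : Type) [Field F] [Fintype F] (m n : ℕ) : IntermediateField F (RatMW F (m+1) (n+1)) :=
  IntermediateField.adjoin F (Set.range fun p : Fin (m+1) × Fin (n+1) =>
    algebraMap (PolyMW F (m+1) (n+1)) (RatMW F (m+1) (n+1)) (gen F m n p.1 p.2))

lemma gen_mem (F : Type) [Field F] [Fintype F] (m n : ℕ) (i : Fin (m+1)) (k : Fin (n+1)) :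
    algebraMap _ (RatMW F (m+1) (n+1)) (gen F m n i k) ∈ EE F m n :=
  IntermediateField.subset_adjoin _ _ ⟨(i, k), rfl⟩

lemma det_mem (F : Type) [Field F] [Fintype F] (m n : ℕ) :
    (moore F (xK F m n)).det ∈ EE F m n := by
  have := gen_mem F m n 0 0
  rwa [map_gen, if_pos ⟨rfl, rfl⟩] at this

lemma cramer_mem (F : Type) [Field F] [Fintype F] (m n : ℕ) (i : Fin (m+1)) (k : Fin (n+1)) :
    (moore F (xK F m n)).cramer (fun j => algebraMap _ _ (yv F m n i j)) k ∈ EE F m n := by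
  by_cases h : i = 0 ∧ k = 0
  · obtain ⟨rfl, rfl⟩ := h
    obtain ⟨u, hu⟩ := cramer_zero F m n
    rw [hu]
    exact mul_mem (intCast_mem _ _) (pow_mem (det_mem F m n) _)
  · have := gen_mem F m n i k
    rwa [map_gen, if_neg h] at this

lemma solve (F : Type) [Field F] [Fintype F] (m n : ℕ) (i : Fin (m+1)) :
    ∃ c : Fin (n+1) → EE F m n, ∀ j, algebraMap _ (RatMW F (m+1) (n+1)) (yv F m n i j) =
      ∑ k, (c k : RatMW F (m+1) (n+1)) * xK F m n j ^ (Fintype.card F ^ (k : ℕ)) := by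
  have hd := moore_ne (xK_li F m n)
  refine ⟨fun k => ⟨_, div_mem (cramer_mem F m n i k) (det_mem F m n)⟩, fun j => ?_⟩
  have h := congrFun (Matrix.mulVec_cramer (moore F (xK F m n))
    (fun j => algebraMap _ (RatMW F (m+1) (n+1)) (yv F m n i j))) j
  simp only [Pi.smul_apply, smul_eq_mul, Matrix.mulVec, dotProduct] at h
  apply mul_left_cancel₀ hd
  rw [← h, Finset.mul_sum]
  refine Finset.sum_congr rfl fun k _ => ?_
  simp only [moore, Matrix.of_apply] at hd ⊢
  field_simp

lemma fracAct_C {F : Type} [Field F] {m n : ℕ} (σ : GL (Fin n) F) (a : F) :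
    fracAct σ (algebraMap F (RatMW F m n) a) = algebraMap F _ a := by
  rw [IsScalarTower.algebraMap_apply F (PolyMW F m n), fracAct_algebraMap]
  congr 1
  exact AlgHom.commutes _ _

lemma SL_det {F : Type} [Field F] {n : ℕ} {σ : GL (Fin n) F} :
    σ ∈ SLsub F n ↔ (σ : Matrix (Fin n) (Fin n) F).det = 1 := by
  rw [SLsub, MonoidHom.mem_ker, Units.ext_iff]
  rfl

lemma EE_le (F : Type) [Field F] [Fintype F] (m n : ℕ) :
    ∀ a ∈ EE F m n, a ∈ fixedSubfield F (m+1) (n+1) (SLsub F (n+1)) := by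
  intro a ha
  induction ha using IntermediateField.adjoin_induction with
  | mem x hx =>
    obtain ⟨p, rfl⟩ := hx
    intro σ hσ
    simp only
    rw [fracAct_algebraMap, matSub_gen, SL_det.mp hσ, map_one, one_mul]
  | algebraMap x => exact fun σ _ => fracAct_C σ x
  | add x y _ _ hx hy => exact add_mem hx hy
  | inv x _ hx => exact inv_mem hx
  | mul x y _ _ hx hy => exact mul_mem hx hy

lemma EE_top (F : Type) [Field F] [Fintype F] (m n : ℕ) :
    IntermediateField.adjoin (EE F m n) (Set.range (xK F m n)) = ⊤ := by
  rw [eq_top_iff]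
  set T := IntermediateField.adjoin (EE F m n) (Set.range (xK F m n)) with hT
  have hE : ∀ e : EE F m n, (e : RatMW F (m+1) (n+1)) ∈ T := fun e => T.algebraMap_mem e
  have hx : ∀ j, xK F m n j ∈ T := fun j => IntermediateField.subset_adjoin _ _ ⟨j, rfl⟩
  have hp : ∀ p : PolyMW F (m+1) (n+1), algebraMap _ (RatMW F (m+1) (n+1)) p ∈ T := by
    intro p
    induction p using MvPolynomial.induction_on with
    | C a =>
      have := hE (algebraMap F (EE F m n) a)
      rw [← MvPolynomial.algebraMap_eq, ← IsScalarTower.algebraMap_apply]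
      exact this
    | add p q hp hq => rw [map_add]; exact add_mem hp hq
    | mul_X p v hp =>
      rw [map_mul]
      refine mul_mem hp ?_
      obtain ⟨i, j⟩ := v
      by_cases hi : i = 0
      · subst hi; exact hx j
      · obtain ⟨c, hc⟩ := solve F m n i
        have := hc j
        rw [yv, if_neg hi] at this
        rw [this]
        exact sum_mem fun k _ => mul_mem (hE _) (pow_mem (hx j) _)
  intro z _
  obtain ⟨a, b, _, rfl⟩ := IsFractionRing.div_surjective (PolyMW F (m+1) (n+1)) z
  exact div_mem (hp a) (hp b)

lemma fixed_le (F : Type) [Field F] [Fintype F] (m n : ℕ) :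
    ∀ a ∈ fixedSubfield F (m+1) (n+1) (SLsub F (n+1)), a ∈ EE F m n := by
  intro a ha
  obtain ⟨c, hc⟩ := solve F m n 0
  obtain ⟨hgal, hfin, hA⟩ := galois_core (EE F m n) (xK_li F m n) c (fun j => by
    rw [← hc j]; simp [yv, xK]) (EE_top F m n)
  suffices h : a ∈ (⊥ : IntermediateField (EE F m n) (RatMW F (m+1) (n+1))) by
    obtain ⟨e, rfl⟩ := IntermediateField.mem_bot.mp h
    exact e.2
  rw [IsGalois.mem_bot_iff_fixed]
  intro τ
  obtain ⟨A, hA⟩ := hA τ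
  have hτF : ∀ b : F, τ (algebraMap F _ b) = algebraMap F _ b := by
    intro b
    rw [IsScalarTower.algebraMap_apply F (EE F m n)]
    exact τ.commutes _
  have hτE : ∀ e : EE F m n, τ (e : RatMW F (m+1) (n+1)) = e := fun e => τ.commutes e
  have hdet : A.det = 1 := by
    have h1 := det_equiv (τ : RatMW F (m+1) (n+1) →+* RatMW F (m+1) (n+1)) A (moore F (xK F m n)) (by
      intro j l
      simp only [moore, Matrix.of_apply, RingHom.coe_coe, map_pow, hA]
      rw [← frq_apply F]
      simp only [map_sum, map_smul, frq_apply])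
    have h2 : τ (moore F (xK F m n)).det = (moore F (xK F m n)).det := hτE ⟨_, det_mem F m n⟩
    rw [RingHom.coe_coe, h2] at h1
    have h3 := (mul_eq_right₀ (moore_ne (xK_li F m n))).mp h1.symm
    rw [← map_one (algebraMap F (RatMW F (m+1) (n+1)))] at h3
    exact (algebraMap F (RatMW F (m+1) (n+1))).injective h3
  let σ : GL (Fin (n+1)) F := Matrix.GeneralLinearGroup.mkOfDetNeZero A (by rw [hdet]; exact one_ne_zero)
  have hσc : (σ : Matrix (Fin (n+1)) (Fin (n+1)) F) = A := rfl
  have hσ : σ ∈ SLsub F (n+1) := SL_det.mpr hdet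
  have hσE : ∀ e : EE F m n, fracAct σ (e : RatMW F (m+1) (n+1)) = e := fun e => EE_le F m n e e.2 σ hσ
  have hx : ∀ j, τ (xK F m n j) = fracAct σ (xK F m n j) := by
    intro j
    rw [hA, xK, fracAct_algebraMap, hσc, x0, matSub_X, map_sum]
    refine Finset.sum_congr rfl fun l _ => ?_
    rw [Algebra.smul_def, Algebra.smul_def, map_mul, ← IsScalarTower.algebraMap_apply]
    rfl
  have key : (τ : RatMW F (m+1) (n+1) →+* RatMW F (m+1) (n+1)) = fracAct σ := by
    apply IsLocalization.ringHom_ext (nonZeroDivisors (PolyMW F (m+1) (n+1)))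
    apply MvPolynomial.ringHom_ext
    · intro b
      simp only [RingHom.comp_apply, RingHom.coe_coe]
      rw [← MvPolynomial.algebraMap_eq, ← IsScalarTower.algebraMap_apply, hτF, fracAct_C]
    · rintro ⟨i, j⟩
      simp only [RingHom.comp_apply, RingHom.coe_coe]
      by_cases hi : i = 0
      · subst hi; exact hx j
      · obtain ⟨c, hc⟩ := solve F m n i
        have := hc j
        rw [yv, if_neg hi] at this
        rw [this]
        simp only [map_sum, map_mul, map_pow, hτE, hσE, hx]
  have := RingHom.congr_fun key a
  rw [RingHom.coe_coe] at this
  rw [this]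
  exact ha σ hσ

/-- For every `m, n ≥ 1` there exist `mn` homogeneous polynomials in the invariant ring
`𝔽_q[mW]^{SL_n(𝔽_q)}` that generate the invariant field `𝔽_q(mW)^{SL_n(𝔽_q)}` over `𝔽_q`. -/
theorem invariant_field_gen_SL (F : Type) [Field F] [Fintype F] (m n : ℕ)
    (hm : 1 ≤ m) (hn : 1 ≤ n) :
    ∃ f : Fin (m * n) → PolyMW F m n,
      (∀ i, (∃ d : ℕ, (f i).IsHomogeneous d) ∧
        (∀ σ ∈ SLsub F n, matSub ((σ : GL (Fin n) F) : Matrix (Fin n) (Fin n) F) (f i) = f i)) ∧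
      fixedSubfield F m n (SLsub F n) =
        (IntermediateField.adjoin F
          (Set.range fun i =>
            algebraMap (PolyMW F m n) (RatMW F m n) (f i))).toSubfield := by
  obtain ⟨m, rfl⟩ : ∃ k, m = k + 1 := ⟨m - 1, by omega⟩
  obtain ⟨n, rfl⟩ : ∃ k, n = k + 1 := ⟨n - 1, by omega⟩
  refine ⟨fun i => gen F m n (finProdFinEquiv.symm i).1 (finProdFinEquiv.symm i).2,
    fun i => ⟨gen_hom _ _, fun σ hσ => ?_⟩, ?_⟩
  · rw [matSub_gen, SL_det.mp hσ, map_one, one_mul]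
  · have hr : (Set.range fun i : Fin ((m+1)*(n+1)) =>
        algebraMap (PolyMW F (m+1) (n+1)) (RatMW F (m+1) (n+1))
          (gen F m n (finProdFinEquiv.symm i).1 (finProdFinEquiv.symm i).2)) =
        Set.range fun p : Fin (m+1) × Fin (n+1) =>
          algebraMap (PolyMW F (m+1) (n+1)) (RatMW F (m+1) (n+1)) (gen F m n p.1 p.2) :=
      finProdFinEquiv.symm.surjective.range_comp (fun p : Fin (m+1) × Fin (n+1) =>
          algebraMap (PolyMW F (m+1) (n+1)) (RatMW F (m+1) (n+1)) (gen F m n p.1 p.2))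
    rw [hr]
    ext a
    exact ⟨fixed_le F m n a, EE_le F m n a⟩

end
end

section
/- Let V be a faithful k-dimensional representation of a finite group H over a field 𝔽 and let G ≤ H be a subgroup. Suppose there exist f_1,…,f_k ∈ 𝔽(V)^G with 𝔽(V)^G = 𝔽(f_1,…,f_k), and there exists a homogeneous polynomial f ∈ 𝔽[f_1,…,f_k] ∩ 𝔽[V]^G such that 𝔽[f_1,…,f_k][f^{-1}] ⊆ 𝔽[V]^G[f^{-1}] inside 𝔽(V). If in addition 𝔽[V]^H ⊆ 𝔽[f_1,…,f_k][f^{-1}], then 𝔽[V]^G[f^{-1}] = 𝔽[f_1,…,f_k][f^{-1}]. -/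
open MvPolynomial Matrix

set_option maxHeartbeats 1000000
set_option synthInstance.maxHeartbeats 400000

noncomputable section

/-- The polynomial ring `𝔽[V]` of a `k`-dimensional representation `V`:
a polynomial ring in `k` variables. -/
abbrev PolyV (F : Type) [Field F] (k : ℕ) : Type := MvPolynomial (Fin k) F

/-- The rational function field `𝔽(V)`. -/
abbrev RatV (F : Type) [Field F] (k : ℕ) : Type := FractionRing (PolyV F k)

/-- The substitution endomorphism of `𝔽[V]` induced by a matrix `σ`. -/
def matSubV {F : Type} [Field F] {k : ℕ} (σ : Matrix (Fin k) (Fin k) F) :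
    PolyV F k →ₐ[F] PolyV F k :=
  aeval fun j => ∑ l, C (σ j l) * X l

lemma matSubV_comp {F : Type} [Field F] {k : ℕ} (A B : Matrix (Fin k) (Fin k) F) :
    (matSubV (F := F) A).comp (matSubV B) = matSubV (B * A) := by
  apply MvPolynomial.algHom_ext
  intro j
  simp only [AlgHom.coe_comp, Function.comp_apply, matSubV, aeval_X, map_sum, _root_.map_mul,
    aeval_C, MvPolynomial.algebraMap_eq, Finset.mul_sum]
  rw [Finset.sum_comm]
  refine Finset.sum_congr rfl fun s _ => ?_
  calc ∑ l, C (B j l) * (C (A l s) * X s)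
      = (∑ l, C (B j l * A l s)) * X s := by
        rw [Finset.sum_mul]
        simp [C_mul, mul_assoc]
    _ = C ((B * A) j s) * X s := by
        rw [Matrix.mul_apply, map_sum]

lemma matSubV_one {F : Type} [Field F] {k : ℕ} :
    matSubV (F := F) (1 : Matrix (Fin k) (Fin k) F) = AlgHom.id F _ := by
  apply MvPolynomial.algHom_ext
  intro j
  simp [matSubV, Matrix.one_apply, ite_mul, apply_ite (C (σ := Fin k) (R := F))]

/-- The algebra automorphism of `𝔽[V]` induced by `σ ∈ GL_k(𝔽)`. -/
def matAutV {F : Type} [Field F] {k : ℕ} (σ : GL (Fin k) F) :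
    PolyV F k ≃ₐ[F] PolyV F k :=
  AlgEquiv.ofAlgHom (matSubV (σ : Matrix (Fin k) (Fin k) F))
    (matSubV ((↑(σ⁻¹) : Matrix (Fin k) (Fin k) F)))
    (by rw [matSubV_comp, σ.inv_mul, matSubV_one])
    (by rw [matSubV_comp, σ.mul_inv, matSubV_one])

/-- The automorphism of `𝔽(V)` induced by `σ ∈ GL_k(𝔽)`. -/
def fracActV {F : Type} [Field F] {k : ℕ} (σ : GL (Fin k) F) :
    RatV F k →+* RatV F k :=
  (IsFractionRing.ringEquivOfRingEquiv
    ((matAutV (F := F) (k := k) σ).toRingEquiv) :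
    RatV F k ≃+* RatV F k).toRingHom

lemma aux_exists_poly {F : Type} [Field F] {k : ℕ} {H : Type} [Group H] [Finite H]
    (ρ : H →* GL (Fin k) F) (r : PolyV F k) :
    ∃ q : Polynomial (PolyV F k), q.Monic ∧ q.eval r = 0 ∧
      ∀ n, ∀ h : H, matSubV ((ρ h : GL (Fin k) F) : Matrix (Fin k) (Fin k) F) (q.coeff n)
        = q.coeff n := by
  classical
  cases nonempty_fintype H
  refine ⟨∏ g : H, (Polynomial.X - Polynomial.C
    (matSubV ((ρ g : GL (Fin k) F) : Matrix (Fin k) (Fin k) F) r)), ?_, ?_, ?_⟩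
  · exact Polynomial.monic_prod_of_monic _ _ fun g _ => Polynomial.monic_X_sub_C _
  · rw [Polynomial.eval_prod]
    refine Finset.prod_eq_zero (Finset.mem_univ 1) ?_
    simp [matSubV_one]
  · intro n h
    have key : (∏ g : H, (Polynomial.X - Polynomial.C
        (matSubV ((ρ g : GL (Fin k) F) : Matrix (Fin k) (Fin k) F) r))).map
        (matSubV ((ρ h : GL (Fin k) F) : Matrix (Fin k) (Fin k) F)).toRingHom =
        ∏ g : H, (Polynomial.X - Polynomial.C
        (matSubV ((ρ g : GL (Fin k) F) : Matrix (Fin k) (Fin k) F) r)) := by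
      rw [Polynomial.map_prod]
      refine Fintype.prod_equiv (Equiv.mulRight h) _ _ fun g => ?_
      have := DFunLike.congr_fun (matSubV_comp ((ρ h : GL (Fin k) F) : Matrix (Fin k) (Fin k) F)
        ((ρ g : GL (Fin k) F) : Matrix (Fin k) (Fin k) F)) r
      simp only [AlgHom.comp_apply] at this
      simp [this]
    conv_rhs => rw [← key]
    rw [Polynomial.coeff_map]
    rfl

lemma aux_isIntegral {F : Type} [Field F] {k : ℕ} {H : Type} [Group H] [Finite H]
    (ρ : H →* GL (Fin k) F) {S : Type} [CommRing S] [Algebra S (RatV F k)]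
    (hS : ∀ r : PolyV F k, (∀ h : H,
      matSubV ((ρ h : GL (Fin k) F) : Matrix (Fin k) (Fin k) F) r = r) →
      ∃ s : S, algebraMap S (RatV F k) s = algebraMap (PolyV F k) (RatV F k) r)
    (r : PolyV F k) : IsIntegral S (algebraMap (PolyV F k) (RatV F k) r) := by
  obtain ⟨q, hq, hqr, hqH⟩ := aux_exists_poly ρ r
  have hl : q.map (algebraMap (PolyV F k) (RatV F k)) ∈
      Polynomial.lifts (algebraMap S (RatV F k)) := by
    rw [Polynomial.lifts_iff_coeff_lifts]
    intro n
    rw [Polynomial.coeff_map]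
    exact hS _ (hqH n)
  obtain ⟨q', h1, -, h2⟩ := Polynomial.lifts_and_natDegree_eq_and_monic hl (hq.map _)
  refine ⟨q', h2, ?_⟩
  rw [← Polynomial.eval_map, h1, Polynomial.eval_map, Polynomial.eval₂_at_apply, hqr, map_zero]

lemma aux_fracAct {F : Type} [Field F] {k : ℕ} (σ : GL (Fin k) F) (r : PolyV F k) :
    fracActV σ (algebraMap (PolyV F k) (RatV F k) r) =
      algebraMap (PolyV F k) (RatV F k) (matSubV (σ : Matrix (Fin k) (Fin k) F) r) := by
  unfold fracActV
  exact IsFractionRing.ringEquivOfRingEquiv_algebraMap _ r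

lemma aux_denom {F K : Type} [Field F] [Field K] [Algebra F K] {s : Set K} {P : K}
    (hP0 : P ≠ 0) (hP : P ∈ Algebra.adjoin F s) {a : K}
    (ha : a ∈ Algebra.adjoin F (s ∪ {P⁻¹})) : ∃ n : ℕ, P ^ n * a ∈ Algebra.adjoin F s := by
  induction ha using Algebra.adjoin_induction with
  | mem x hx =>
    rcases hx with hx | hx
    · exact ⟨0, by simpa using Algebra.subset_adjoin hx⟩
    · rw [Set.mem_singleton_iff] at hx
      exact ⟨1, by rw [hx, pow_one, mul_inv_cancel₀ hP0]; exact one_mem _⟩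
  | algebraMap c => exact ⟨0, by simpa using Subalgebra.algebraMap_mem _ c⟩
  | add x y _ _ hx hy =>
    obtain ⟨n, hn⟩ := hx
    obtain ⟨m, hm⟩ := hy
    refine ⟨n + m, ?_⟩
    have : P ^ (n + m) * (x + y) = P ^ m * (P ^ n * x) + P ^ n * (P ^ m * y) := by ring
    rw [this]
    exact add_mem (mul_mem (pow_mem hP _) hn) (mul_mem (pow_mem hP _) hm)
  | mul x y _ _ hx hy =>
    obtain ⟨n, hn⟩ := hx
    obtain ⟨m, hm⟩ := hy
    refine ⟨n + m, ?_⟩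
    have : P ^ (n + m) * (x * y) = (P ^ n * x) * (P ^ m * y) := by ring
    rw [this]
    exact mul_mem hn hm

open IntermediateField.algebraAdjoinAdjoin in
lemma aux_closed {F K : Type} [Field F] [Field K] [Algebra F K] {k : ℕ} {f : Fin k → K}
    (hf : AlgebraicIndependent F f) {x : K}
    (hx : IsIntegral (Algebra.adjoin F (Set.range f)) x)
    (hxL : x ∈ IntermediateField.adjoin F (Set.range f)) :
    x ∈ Algebra.adjoin F (Set.range f) := by
  have : IsIntegrallyClosed (Algebra.adjoin F (Set.range f)) :=
    IsIntegrallyClosed.of_equiv hf.aevalEquiv.toRingEquiv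
  have hx' : IsIntegral (Algebra.adjoin F (Set.range f))
      (⟨x, hxL⟩ : IntermediateField.adjoin F (Set.range f)) := by
    rw [← isIntegral_algebraMap_iff (B := K)
      (FaithfulSMul.algebraMap_injective (IntermediateField.adjoin F (Set.range f)) K)]
    exact hx
  obtain ⟨y, hy⟩ := IsIntegrallyClosed.isIntegral_iff.mp hx'
  have := congrArg Subtype.val hy
  have h2 : (y : K) = x := this
  rw [← h2]
  exact y.2

lemma aux_main {F K : Type} [Field F] [Field K] [Algebra F K] {k : ℕ} {f : Fin k → K}
    (hf : AlgebraicIndependent F f) {P : K} (hP0 : P ≠ 0)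
    (hP : P ∈ Algebra.adjoin F (Set.range f)) {x : K}
    (hx : IsIntegral (Algebra.adjoin F (Set.range f ∪ {P⁻¹})) x)
    (hxL : x ∈ IntermediateField.adjoin F (Set.range f)) :
    x ∈ Algebra.adjoin F (Set.range f ∪ {P⁻¹}) := by
  have hle : Algebra.adjoin F (Set.range f) ≤ Algebra.adjoin F (Set.range f ∪ {P⁻¹}) :=
    Algebra.adjoin_mono Set.subset_union_left
  have hinv : P⁻¹ ∈ Algebra.adjoin F (Set.range f ∪ {P⁻¹}) :=
    Algebra.subset_adjoin (Or.inr rfl)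
  letI : Algebra (Algebra.adjoin F (Set.range f)) (Algebra.adjoin F (Set.range f ∪ {P⁻¹})) :=
    (Subalgebra.inclusion hle).toRingHom.toAlgebra
  haveI : IsScalarTower (Algebra.adjoin F (Set.range f))
      (Algebra.adjoin F (Set.range f ∪ {P⁻¹})) K := IsScalarTower.of_algebraMap_eq fun _ => rfl
  have hval : ∀ b : Algebra.adjoin F (Set.range f),
      ((algebraMap (Algebra.adjoin F (Set.range f))
        (Algebra.adjoin F (Set.range f ∪ {P⁻¹})) b : _) : K) = b := fun _ => rfl
  haveI : IsLocalization (Submonoid.powers (⟨P, hP⟩ : Algebra.adjoin F (Set.range f)))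
      (Algebra.adjoin F (Set.range f ∪ {P⁻¹})) := by
    refine ⟨?_, ?_, ?_⟩
    · rintro ⟨_, n, rfl⟩
      refine IsUnit.of_mul_eq_one ⟨P⁻¹ ^ n, pow_mem hinv n⟩ (Subtype.ext ?_)
      change P ^ n * P⁻¹ ^ n = 1
      rw [← mul_pow, mul_inv_cancel₀ hP0, one_pow]
    · rintro ⟨a, ha⟩
      obtain ⟨n, hn⟩ := aux_denom hP0 hP ha
      refine ⟨⟨⟨_, hn⟩, ⟨_, n, rfl⟩⟩, Subtype.ext ?_⟩
      change a * P ^ n = P ^ n * a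
      ring
    · intro a b hab
      refine ⟨1, ?_⟩
      have h4 := congrArg Subtype.val hab
      rw [hval, hval] at h4
      have : a = b := Subtype.ext h4
      rw [this]
  obtain ⟨⟨_, n, rfl⟩, hn⟩ := IsIntegral.exists_multiple_integral_of_isLocalization
    (Submonoid.powers (⟨P, hP⟩ : Algebra.adjoin F (Set.range f))) x hx
  have hn' : IsIntegral (Algebra.adjoin F (Set.range f)) (P ^ n * x) := hn
  have hPL : P ∈ IntermediateField.adjoin F (Set.range f) :=
    IntermediateField.algebra_adjoin_le_adjoin F _ hP
  have := hle (aux_closed hf hn' (mul_mem (pow_mem hPL n) hxL))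
  have h3 : x = P⁻¹ ^ n * (P ^ n * x) := by
    rw [← mul_assoc, ← mul_pow, inv_mul_cancel₀ hP0, one_pow, one_mul]
  rw [h3]
  exact mul_mem (pow_mem hinv n) this

open IntermediateField.algebraAdjoinAdjoin in
lemma aux_indep {F : Type} [Field F] {k : ℕ} {f : Fin k → RatV F k}
    (h : ∀ r : PolyV F k, IsIntegral (IntermediateField.adjoin F (Set.range f))
      (algebraMap (PolyV F k) (RatV F k) r)) : AlgebraicIndependent F f := by
  have h1 : Algebra.IsAlgebraic (IntermediateField.adjoin F (Set.range f)) (RatV F k) := by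
    refine ⟨fun x => ?_⟩
    obtain ⟨a, b, -, rfl⟩ := IsFractionRing.div_surjective (A := PolyV F k) x
    rw [div_eq_mul_inv]
    exact (h a).isAlgebraic.mul (h b).isAlgebraic.inv
  have h2 : Algebra.IsAlgebraic (Algebra.adjoin F (Set.range f)) (RatV F k) :=
    (IsFractionRing.comap_isAlgebraic_iff (K := IntermediateField.adjoin F (Set.range f))).mpr h1
  refine (Algebra.IsAlgebraic.isTranscendenceBasis_of_le_trdeg_of_finite F f ?_).1
  have hX : AlgebraicIndependent F
      (fun i : Fin k => algebraMap (PolyV F k) (RatV F k) (X i)) :=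
    (MvPolynomial.algebraicIndependent_X (Fin k) F).map' (f := IsScalarTower.toAlgHom F _ _)
      (IsFractionRing.injective (PolyV F k) (RatV F k))
  exact hX.cardinalMk_le_trdeg

/-- **A criterion for an invariant ring to be a localized polynomial ring (second form).**
Let `V` be a faithful `k`-dimensional representation of a finite group `H` over a field `𝔽`
(given by an injective `ρ : H →* GL_k(𝔽)`) and `G ≤ H`.  Suppose `𝔽(V)^G = 𝔽(f_1,…,f_k)`
with `f_1,…,f_k ∈ 𝔽(V)^G`, and `f` is a homogeneous polynomial in
`𝔽[f_1,…,f_k] ∩ 𝔽[V]^G` with `𝔽[f_1,…,f_k][f⁻¹] ⊆ 𝔽[V]^G[f⁻¹]`.  If moreover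
`𝔽[V]^H ⊆ 𝔽[f_1,…,f_k][f⁻¹]`, then `𝔽[V]^G[f⁻¹] = 𝔽[f_1,…,f_k][f⁻¹]`. -/
theorem localized_criterion_full_invariants (F : Type) [Field F] (k : ℕ)
    (H : Type) [Group H] [Finite H]
    (ρ : H →* GL (Fin k) F) (hfaithful : Function.Injective ρ)
    (G : Subgroup H)
    (f : Fin k → RatV F k)
    (hfG : ∀ i, ∀ h ∈ G, fracActV (ρ h) (f i) = f i)
    (hgen : {a : RatV F k | ∀ h ∈ G, fracActV (ρ h) a = a} =
      ↑(IntermediateField.adjoin F (Set.range f)))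
    (p : PolyV F k) (dp : ℕ) (hphom : p.IsHomogeneous dp) (hp0 : p ≠ 0)
    (hpG : ∀ h ∈ G, matSubV ((ρ h : GL (Fin k) F) : Matrix (Fin k) (Fin k) F) p = p)
    (hpadj : algebraMap (PolyV F k) (RatV F k) p ∈ Algebra.adjoin F (Set.range f))
    (hsub : Algebra.adjoin F
        (Set.range f ∪ {(algebraMap (PolyV F k) (RatV F k) p)⁻¹}) ≤
      Algebra.adjoin F
        ((algebraMap (PolyV F k) (RatV F k) ''
            {r : PolyV F k | ∀ h ∈ G,
              matSubV ((ρ h : GL (Fin k) F) : Matrix (Fin k) (Fin k) F) r = r}) ∪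
          {(algebraMap (PolyV F k) (RatV F k) p)⁻¹}))
    (hHsub : (algebraMap (PolyV F k) (RatV F k) ''
        {r : PolyV F k | ∀ h : H,
          matSubV ((ρ h : GL (Fin k) F) : Matrix (Fin k) (Fin k) F) r = r}) ⊆
      ↑(Algebra.adjoin F (Set.range f ∪ {(algebraMap (PolyV F k) (RatV F k) p)⁻¹}))) :
    Algebra.adjoin F
        ((algebraMap (PolyV F k) (RatV F k) ''
            {r : PolyV F k | ∀ h ∈ G,
              matSubV ((ρ h : GL (Fin k) F) : Matrix (Fin k) (Fin k) F) r = r}) ∪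
          {(algebraMap (PolyV F k) (RatV F k) p)⁻¹}) =
      Algebra.adjoin F (Set.range f ∪ {(algebraMap (PolyV F k) (RatV F k) p)⁻¹}) := by
  have hinvL : ∀ r : PolyV F k, (∀ h ∈ G,
      matSubV ((ρ h : GL (Fin k) F) : Matrix (Fin k) (Fin k) F) r = r) →
      algebraMap (PolyV F k) (RatV F k) r ∈ IntermediateField.adjoin F (Set.range f) := by
    intro r hr
    have : algebraMap (PolyV F k) (RatV F k) r ∈
        {a : RatV F k | ∀ h ∈ G, fracActV (ρ h) a = a} := by
      intro h hh
      rw [aux_fracAct, hr h hh]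
    rw [hgen] at this
    exact this
  have hP0 : algebraMap (PolyV F k) (RatV F k) p ≠ 0 := by
    simpa using hp0
  have hf : AlgebraicIndependent F f := by
    refine aux_indep fun r => aux_isIntegral ρ (fun r hr => ?_) r
    exact ⟨⟨_, hinvL r fun h _ => hr h⟩, rfl⟩
  refine le_antisymm (Algebra.adjoin_le ?_) hsub
  rintro _ (⟨r, hr, rfl⟩ | hx)
  · refine aux_main hf hP0 hpadj (aux_isIntegral ρ (fun r hr => ?_) r) (hinvL r hr)
    exact ⟨⟨_, hHsub ⟨r, hr, rfl⟩⟩, rfl⟩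
  · exact Algebra.subset_adjoin (Or.inr hx)

end
end
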